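/- Let A and B be anticommuting Hermitian involutions on a finite-dimensional Hilbert space and ψ a unit vector. Then ⟨ψ|A|ψ⟩² + ⟨ψ|B|ψ⟩² ≤ 1. In particular, at least one of |⟨ψ|A|ψ⟩|, |⟨ψ|B|ψ⟩| is at most 1/√2. -/

import Mathlib

open Matrix

/-!
If `S` and `T` are anticommuting symmetric involutions, then `2 Re ⟪S ψ, T ψ⟫ = ⟪ψ, (S T + T S) ψ⟫`
vanishes and `‖T ψ‖² = ⟪ψ, T² ψ⟫ = ‖ψ‖²`. So for a unit vector `ψ` the vectors `T i ψ` are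
orthonormal for the real inner product `Re ⟪·, ·⟫`, and the bound on the sum of the squared
expectation values `Re ⟪ψ, T i ψ⟫` is Bessel's inequality for `ψ`.
-/

section InnerProductSpace

variable {𝕜 E ι : Type*} [RCLike 𝕜] [SeminormedAddCommGroup E] [InnerProductSpace 𝕜 E]

theorem sum_sq_re_inner_le_sq_norm {v : ι → E} (hnorm : ∀ i, ‖v i‖ = 1)
    (horth : Pairwise fun i j => RCLike.re (inner 𝕜 (v i) (v j)) = 0) (x : E) (s : Finset ι) :
    ∑ i ∈ s, RCLike.re (inner 𝕜 x (v i)) ^ 2 ≤ ‖x‖ ^ 2 := by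
  let := InnerProductSpace.rclikeToReal 𝕜 E
  have hv : Orthonormal ℝ v := ⟨hnorm, horth⟩
  simpa only [Real.norm_eq_abs, sq_abs, real_inner_eq_re_inner 𝕜, inner_re_symm x] using
    hv.sum_inner_products_le x (s := s)

theorem re_inner_apply_apply_eq_zero_of_anticommute {S T : E →ₗ[𝕜] E} (hS : S.IsSymmetric)
    (hT : T.IsSymmetric) (hST : S * T + T * S = 0) (x : E) :
    RCLike.re (inner 𝕜 (S x) (T x)) = 0 := by
  have hsum : inner 𝕜 (S x) (T x) + inner 𝕜 (T x) (S x) = 0 := calc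
    inner 𝕜 (S x) (T x) + inner 𝕜 (T x) (S x) = inner 𝕜 x ((S * T + T * S) x) := by
      rw [hS, hT, ← inner_add_right, LinearMap.add_apply, Module.End.mul_apply,
        Module.End.mul_apply]
    _ = 0 := by rw [hST, LinearMap.zero_apply, inner_zero_right]
  have hre := congrArg RCLike.re hsum
  rw [map_add, map_zero, inner_re_symm (T x)] at hre
  linarith

theorem norm_apply_eq_of_isSymmetric_of_mul_self_eq_one {T : E →ₗ[𝕜] E} (hT : T.IsSymmetric)
    (hT2 : T * T = 1) (x : E) : ‖T x‖ = ‖x‖ := by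
  have hinner : inner 𝕜 (T x) (T x) = inner 𝕜 x x := by
    rw [hT, ← Module.End.mul_apply, hT2, Module.End.one_apply]
  rw [norm_eq_sqrt_re_inner (𝕜 := 𝕜), hinner, ← norm_eq_sqrt_re_inner]

end InnerProductSpace

theorem exists_abs_le_sqrt_div_card {ι : Type*} [Fintype ι] [Nonempty ι] {a : ι → ℝ} {c : ℝ}
    (h : ∑ i, a i ^ 2 ≤ c) : ∃ i, |a i| ≤ √(c / Fintype.card ι) := by
  have hsum : ∑ i, a i ^ 2 ≤ ∑ _i : ι, c / Fintype.card ι := by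
    rwa [Finset.sum_const, Finset.card_univ, nsmul_eq_mul, mul_div_cancel₀]
    exact Nat.cast_ne_zero.mpr Fintype.card_ne_zero
  obtain ⟨i, -, hi⟩ := Finset.exists_le_of_sum_le Finset.univ_nonempty hsum
  exact ⟨i, Real.abs_le_sqrt hi⟩

theorem expectation_squares_le_one_general {𝕜 E ι : Type*} [RCLike 𝕜] [SeminormedAddCommGroup E]
    [InnerProductSpace 𝕜 E] [Fintype ι] [Nonempty ι] {T : ι → E →ₗ[𝕜] E}
    (hT : ∀ i, (T i).IsSymmetric) (hanti : Pairwise fun i j => T i * T j + T j * T i = 0)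
    (hinv : ∀ i, T i * T i = 1) {ψ : E} (hψ : ‖ψ‖ = 1) :
    ∑ i, RCLike.re (inner 𝕜 ψ (T i ψ)) ^ 2 ≤ 1 ∧
      ∃ i, |RCLike.re (inner 𝕜 ψ (T i ψ))| ≤ 1 / √(Fintype.card ι) := by
  have hnorm (i : ι) : ‖T i ψ‖ = 1 :=
    (norm_apply_eq_of_isSymmetric_of_mul_self_eq_one (hT i) (hinv i) ψ).trans hψ
  have horth : Pairwise fun i j => RCLike.re (inner 𝕜 (T i ψ) (T j ψ)) = 0 := fun i j hij =>
    re_inner_apply_apply_eq_zero_of_anticommute (hT i) (hT j) (hanti hij) ψ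
  have hsum : ∑ i, RCLike.re (inner 𝕜 ψ (T i ψ)) ^ 2 ≤ 1 := by
    simpa only [hψ, one_pow] using sum_sq_re_inner_le_sq_norm hnorm horth ψ Finset.univ
  refine ⟨hsum, ?_⟩
  simpa only [Real.sqrt_div zero_le_one, Real.sqrt_one] using exists_abs_le_sqrt_div_card hsum

section Matrix

variable {𝕜 n : Type*} [RCLike 𝕜] [Fintype n]

theorem inner_toLp_toEuclideanLin_toLp [DecidableEq n] (A : Matrix n n 𝕜) (x : n → 𝕜) :
    inner 𝕜 (WithLp.toLp 2 x) (A.toEuclideanLin (WithLp.toLp 2 x)) = star x ⬝ᵥ A *ᵥ x := by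
  rw [toLpLin_toLp, EuclideanSpace.inner_toLp_toLp, toLin'_apply, dotProduct_comm]

theorem norm_toLp_eq_one_of_star_dotProduct_self_eq_one {x : n → 𝕜} (hx : star x ⬝ᵥ x = 1) :
    ‖WithLp.toLp 2 x‖ = 1 := by
  rw [norm_eq_sqrt_re_inner (𝕜 := 𝕜), EuclideanSpace.inner_toLp_toLp, dotProduct_comm, hx,
    RCLike.one_re, Real.sqrt_one]

theorem expectation_squares_le_one_of_isHermitian [DecidableEq n] {ι : Type*} [Fintype ι]
    [Nonempty ι] {A : ι → Matrix n n 𝕜} (hA : ∀ i, (A i).IsHermitian)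
    (hanti : Pairwise fun i j => A i * A j + A j * A i = 0) (hinv : ∀ i, A i * A i = 1)
    {ψ : n → 𝕜} (hψ : star ψ ⬝ᵥ ψ = 1) :
    ∑ i, RCLike.re (star ψ ⬝ᵥ A i *ᵥ ψ) ^ 2 ≤ 1 ∧
      ∃ i, |RCLike.re (star ψ ⬝ᵥ A i *ᵥ ψ)| ≤ 1 / √(Fintype.card ι) := by
  have hsymm (i : ι) : (A i).toEuclideanLin.IsSymmetric :=
    isSymmetric_toEuclideanLin_iff.mpr (hA i)
  have hLanti ⦃i j : ι⦄ (hij : i ≠ j) :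
      (A i).toEuclideanLin * (A j).toEuclideanLin + (A j).toEuclideanLin * (A i).toEuclideanLin
        = 0 := by
    rw [Module.End.mul_eq_comp, Module.End.mul_eq_comp, ← toLpLin_mul_same, ← toLpLin_mul_same,
      ← map_add, hanti hij, map_zero]
  have hLinv (i : ι) : (A i).toEuclideanLin * (A i).toEuclideanLin = 1 := by
    rw [Module.End.mul_eq_comp, ← toLpLin_mul_same, hinv, toLpLin_one, Module.End.one_eq_id]
  simpa only [← inner_toLp_toEuclideanLin_toLp] using
    expectation_squares_le_one_general hsymm hLanti hLinv
      (norm_toLp_eq_one_of_star_dotProduct_self_eq_one hψ)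

end Matrix

/-- Anticommuting Hermitian involutions: ⟨A⟩² + ⟨B⟩² ≤ 1, so one of the
expectation values has absolute value at most 1/√2. -/
theorem expectation_squares_le_one {n : ℕ} (A B : Matrix (Fin n) (Fin n) ℂ)
    (hA : A.IsHermitian) (hB : B.IsHermitian)
    (hAB : A * B + B * A = 0) (hA2 : A * A = 1) (hB2 : B * B = 1)
    (ψ : Fin n → ℂ) (hψ : star ψ ⬝ᵥ ψ = 1) :
    (star ψ ⬝ᵥ A.mulVec ψ).re ^ 2 + (star ψ ⬝ᵥ B.mulVec ψ).re ^ 2 ≤ 1 ∧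
    (|(star ψ ⬝ᵥ A.mulVec ψ).re| ≤ 1 / Real.sqrt 2 ∨
     |(star ψ ⬝ᵥ B.mulVec ψ).re| ≤ 1 / Real.sqrt 2) := by
  have hanti : Pairwise fun i j : Fin 2 => ![A, B] i * ![A, B] j + ![A, B] j * ![A, B] i = 0 := by
    simp [Pairwise, Fin.forall_fin_two, hAB, add_comm (B * A)]
  simpa [Fin.sum_univ_two, Fin.exists_fin_two] using
    expectation_squares_le_one_of_isHermitian (Fin.forall_fin_two.mpr ⟨hA, hB⟩) hanti
      (Fin.forall_fin_two.mpr ⟨hA2, hB2⟩) hψ
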